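/- arXiv:1506.05719 — 9 statements merged into one kernel-verified Lean document; each statement's English description precedes it below -/
import Mathlib

section
/- If a (connected) graph G belongs to Free(claw, 4K_1, K_5−e, 5-wheel, C_5-twin, P_5-twin) and contains an induced cycle on seven vertices, then G has at most 21 vertices. -/
open SimpleGraph

/-- The claw `K_{1,3}`: vertex 0 adjacent to 1, 2, 3. -/
def claw : SimpleGraph (Fin 4) := SimpleGraph.fromRel (fun a _ => a = 0)

/-- `4K_1`: the edgeless graph on four vertices. -/
def fourK1 : SimpleGraph (Fin 4) := ⊥

/-- `K_5 - e`: the complete graph on five vertices minus the edge {0,1}. -/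
def K5e : SimpleGraph (Fin 5) :=
  SimpleGraph.fromRel (fun a b => ¬(a = 0 ∧ b = 1) ∧ ¬(a = 1 ∧ b = 0))

/-- The 5-wheel: the cycle 0-1-2-3-4-0 together with hub 5 adjacent to all. -/
def wheel5 : SimpleGraph (Fin 6) :=
  SimpleGraph.fromRel (fun a b =>
    (a ≠ 5 ∧ b ≠ 5 ∧ b.val = (a.val + 1) % 5) ∨ a = 5 ∨ b = 5)

/-- The `C_5`-twin: the cycle 0-1-2-3-4-0 together with vertex 5, a true twin
of vertex 0 (adjacent to 0, 1 and 4). -/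
def C5twin : SimpleGraph (Fin 6) :=
  SimpleGraph.fromRel (fun a b =>
    (a ≠ 5 ∧ b ≠ 5 ∧ b.val = (a.val + 1) % 5) ∨ (a = 5 ∧ (b = 0 ∨ b = 1 ∨ b = 4)))

/-- The `P_5`-twin: the path 0-1-2-3-4 together with vertex 5, a true twin of
the middle vertex 2 (adjacent to 1, 2 and 3). -/
def P5twin : SimpleGraph (Fin 6) :=
  SimpleGraph.fromRel (fun a b =>
    (a ≠ 5 ∧ b ≠ 5 ∧ b.val = a.val + 1) ∨ (a = 5 ∧ (b = 1 ∨ b = 2 ∨ b = 3)))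

/-- The chordless cycle on seven vertices. -/
def C7 : SimpleGraph (Fin 7) :=
  SimpleGraph.fromRel (fun a b => b.val = (a.val + 1) % 7)

/-- `G` is `H`-free: `G` contains no induced subgraph isomorphic to `H`,
i.e. there is no graph embedding of `H` into `G`. -/
def Free {V W : Type*} (G : SimpleGraph V) (H : SimpleGraph W) : Prop :=
  IsEmpty (H ↪g G)

/-- `X_i`: vertices outside the five-cycle `v 0, …, v 4` whose neighbours on the
cycle are exactly `v i` and `v (i+1)`. -/
def cycX {V : Type*} (G : SimpleGraph V) (v : ZMod 5 → V) (i : ZMod 5) : Set V :=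
  {w | w ∉ Set.range v ∧ ∀ j : ZMod 5, G.Adj w (v j) ↔ (j = i ∨ j = i + 1)}

/-- `Y_i`: vertices outside the five-cycle whose neighbours on the cycle are
exactly `v i, v (i+1), v (i+2), v (i+3)`. -/
def cycY {V : Type*} (G : SimpleGraph V) (v : ZMod 5 → V) (i : ZMod 5) : Set V :=
  {w | w ∉ Set.range v ∧
    ∀ j : ZMod 5, G.Adj w (v j) ↔ (j = i ∨ j = i + 1 ∨ j = i + 2 ∨ j = i + 3)}

/-- `R`: vertices outside the five-cycle with no neighbour on the cycle. -/
def cycR {V : Type*} (G : SimpleGraph V) (v : ZMod 5 → V) : Set V :=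
  {w | w ∉ Set.range v ∧ ∀ j : ZMod 5, ¬ G.Adj w (v j)}

/-!
Fix an induced heptagon and a vertex `w` off it. The claw, `4K₁` and `P₅`-twin leave only two shapes
for the set of neighbours of `w` on the heptagon: an arc `i, i+1, i+2, i+3`, or two disjoint edges
`i, i+1` and `i+3, i+4`. This gives 14 possible sets. Two vertices with the same set are adjacent,
since otherwise they form a claw together with a vertex of the set and a neighbour of it outside
the set. They are also nonadjacent: on an arc they would give a `K₅ - e`, and on two edges they
would be twins on the five-cycle that closes up the path `i+4, i+5, i+6, i`. So each set occurs at
most once, and there are at most `7 + 14` vertices.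
-/

section ForbiddenSubgraphs

variable {V W : Type*} {G : SimpleGraph V} {H : SimpleGraph W}

theorem not_forall_adj_iff_of_free (h : _root_.Free G H) {f : W → V}
    (hf : Function.Injective f) : ¬ ∀ i j, G.Adj (f i) (f j) ↔ H.Adj i j :=
  fun hadj => h.false ⟨⟨f, hf⟩, hadj _ _⟩

theorem injective_of_forall_adj_iff (hH : ∀ i j, (∀ k, H.Adj i k ↔ H.Adj j k) → i = j)
    {f : W → V} (hadj : ∀ i j, G.Adj (f i) (f j) ↔ H.Adj i j) : Function.Injective f :=
  fun i j hij => hH i j fun k => by rw [← hadj, ← hadj, hij]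

instance : DecidableRel C5twin.Adj := inferInstanceAs (DecidableRel (fromRel _).Adj)

instance : DecidableRel P5twin.Adj := inferInstanceAs (DecidableRel (fromRel _).Adj)

theorem isClique_of_free_claw (h : _root_.Free G claw) {a c : V} (hac : G.Adj a c) :
    G.IsClique {x | G.Adj a x ∧ c ≠ x ∧ ¬ G.Adj c x} := by
  rintro x ⟨hax, hcx, hncx⟩ y ⟨hay, hcy, hncy⟩ hxy
  by_contra hnxy
  have hinj : Function.Injective ![a, c, x, y] :=
    List.nodup_ofFn.1 (by simp [hac.ne, hax.ne, hay.ne, hcx, hcy, hxy])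
  exact not_forall_adj_iff_of_free h hinj (by simp [Fin.forall_fin_succ, claw, G.adj_comm, *])

theorem isClique_of_free_fourK1 (h : _root_.Free G fourK1) {a c : V} (hac : a ≠ c)
    (hnac : ¬ G.Adj a c) :
    G.IsClique {x | a ≠ x ∧ c ≠ x ∧ ¬ G.Adj a x ∧ ¬ G.Adj c x} := by
  rintro x ⟨hax, hcx, hnax, hncx⟩ y ⟨hay, hcy, hnay, hncy⟩ hxy
  by_contra hnxy
  have hinj : Function.Injective ![a, c, x, y] := List.nodup_ofFn.1 (by simp [*])
  exact not_forall_adj_iff_of_free h hinj (by simp [Fin.forall_fin_succ, fourK1, G.adj_comm, *])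

theorem isIndepSet_of_free_K5e (h : _root_.Free G K5e) (p : pathGraph 3 ↪g G) :
    G.IsIndepSet {x | ∀ i, G.Adj x (p i)} := by
  intro x (hx : ∀ i, G.Adj x (p i)) y (hy : ∀ i, G.Adj y (p i)) _ hxy
  have hinj : Function.Injective ![p 0, p 2, p 1, x, y] :=
    List.nodup_ofFn.1 (by simp [(hx _).ne', (hy _).ne', hxy.ne])
  exact not_forall_adj_iff_of_free h hinj (by
    simp [Fin.forall_fin_succ, K5e, pathGraph_adj, hx _, (hx _).symm, hy _, (hy _).symm, hxy,
      hxy.symm])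

theorem isIndepSet_of_free_C5twin (h : _root_.Free G C5twin) (p : pathGraph 4 ↪g G) :
    G.IsIndepSet {x | ∀ i, G.Adj x (p i) ↔ i = 0 ∨ i = 3} := by
  intro x (hx : ∀ i, _ ↔ _) y (hy : ∀ i, _ ↔ _) _ hxy
  have hadj : ∀ i j, G.Adj (![x, p 0, p 1, p 2, p 3, y] i) (![x, p 0, p 1, p 2, p 3, y] j) ↔
      C5twin.Adj i j := by
    simp [Fin.forall_fin_succ, C5twin, pathGraph_adj, hx, hy, hxy, hxy.symm,
      G.adj_comm (p _) x, G.adj_comm (p _) y]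
  exact not_forall_adj_iff_of_free h (injective_of_forall_adj_iff (by decide) hadj) hadj

theorem adj_zero_or_four_of_free_P5twin (h : _root_.Free G P5twin) (p : pathGraph 5 ↪g G) {w : V}
    (h1 : G.Adj w (p 1)) (h2 : G.Adj w (p 2)) (h3 : G.Adj w (p 3)) :
    G.Adj w (p 0) ∨ G.Adj w (p 4) := by
  by_contra! h04
  have hadj : ∀ i j, G.Adj (![p 0, p 1, p 2, p 3, p 4, w] i) (![p 0, p 1, p 2, p 3, p 4, w] j) ↔
      P5twin.Adj i j := by
    simp [Fin.forall_fin_succ, P5twin, pathGraph_adj, h1, h2, h3, h04, G.adj_comm (p _) w]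
  exact not_forall_adj_iff_of_free h (injective_of_forall_adj_iff (by decide) hadj) hadj

theorem adj_zero_or_two_of_free_claw (h : _root_.Free G claw) (p : pathGraph 3 ↪g G) {w : V}
    (hw : w ∉ Set.range p) (h1 : G.Adj w (p 1)) : G.Adj w (p 0) ∨ G.Adj w (p 2) := by
  have hne (i) : w ≠ p i := fun hwi => hw ⟨i, hwi.symm⟩
  by_contra! hn
  have h02 : G.Adj (p 0) (p 2) := isClique_of_free_claw h h1.symm
    ⟨by simp [pathGraph_adj], hne 0, hn.1⟩ ⟨by simp [pathGraph_adj], hne 2, hn.2⟩ (by simp)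
  simp [pathGraph_adj] at h02

theorem not_adj_zero_two_four_of_free_claw (h : _root_.Free G claw) (p : pathGraph 5 ↪g G) (w : V) :
    ¬ (G.Adj w (p 0) ∧ G.Adj w (p 2) ∧ G.Adj w (p 4)) := by
  rintro ⟨h0, h2, h4⟩
  have h02 : G.Adj (p 0) (p 2) := isClique_of_free_claw h h4
    ⟨h0, by simp, by simp [pathGraph_adj]⟩ ⟨h2, by simp, by simp [pathGraph_adj]⟩ (by simp)
  simp [pathGraph_adj] at h02

theorem adj_zero_or_two_or_four_of_free_fourK1 (h : _root_.Free G fourK1)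
    (p : pathGraph 5 ↪g G) {w : V} (hw : w ∉ Set.range p) :
    G.Adj w (p 0) ∨ G.Adj w (p 2) ∨ G.Adj w (p 4) := by
  have hne (i) : w ≠ p i := fun hwi => hw ⟨i, hwi.symm⟩
  by_contra! hn
  have h02 : G.Adj (p 0) (p 2) := isClique_of_free_fourK1 h (hne 4) hn.2.2
    ⟨hne 0, by simp, hn.1, by simp [pathGraph_adj]⟩
    ⟨hne 2, by simp, hn.2.1, by simp [pathGraph_adj]⟩ (by simp)
  simp [pathGraph_adj] at h02

end ForbiddenSubgraphs

section Heptagon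

instance : DecidableRel C7.Adj := inferInstanceAs (DecidableRel (fromRel _).Adj)

theorem C7_adj_add_left (i a b : Fin 7) : C7.Adj (i + a) (i + b) ↔ b = a + 1 ∨ a = b + 1 := by
  decide +revert

/-- The induced path `i, i + 1, …, i + n - 1` on `n ≤ 6` vertices of the heptagon. -/
def heptagonPath {n : ℕ} (hn : n ≤ 6) (i : Fin 7) : pathGraph n ↪g C7 where
  toEmbedding := (Fin.castLEEmb (by omega)).trans (addLeftEmbedding i)
  map_rel_iff' := by
    simp only [Function.Embedding.trans_apply, addLeftEmbedding_apply, Fin.castLEEmb_apply,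
      C7_adj_add_left, pathGraph_adj, Fin.ext_iff, Fin.val_add, Fin.val_castLE, Fin.val_one]
    omega

@[simp]
theorem heptagonPath_apply {n : ℕ} (hn : n ≤ 6) (i : Fin 7) (j : Fin n) :
    heptagonPath hn i j = i + Fin.castLE (by omega) j :=
  rfl

/-- The arc of four consecutive vertices of the heptagon starting at `i`. -/
def fourArc (i : Fin 7) : Finset (Fin 7) := {i, i + 1, i + 2, i + 3}

/-- The vertices of the two disjoint edges `i, i + 1` and `i + 3, i + 4` of the heptagon. -/
def twoEdges (i : Fin 7) : Finset (Fin 7) := {i, i + 1, i + 3, i + 4}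

-- By `hnbr` and `htriple` a maximal run of consecutive members of `N` has length 2, 3 or 4, and
-- `hrun` excludes 3; by `hmeet` a gap has length at most 4. So `N` is one run of length 4 or two
-- runs of length 2, as runs of lengths 2 and 4 would leave a single vertex for the two gaps.
theorem eq_fourArc_or_eq_twoEdges (N : Finset (Fin 7))
    (hnbr : ∀ i, i + 1 ∈ N → i ∈ N ∨ i + 2 ∈ N)
    (htriple : ∀ i, ¬ (i ∈ N ∧ i + 2 ∈ N ∧ i + 4 ∈ N))
    (hmeet : ∀ i, i ∈ N ∨ i + 2 ∈ N ∨ i + 4 ∈ N)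
    (hrun : ∀ i, i + 1 ∈ N → i + 2 ∈ N → i + 3 ∈ N → i ∈ N ∨ i + 4 ∈ N) :
    ∃ i, N = fourArc i ∨ N = twoEdges i := by
  revert N
  decide +kernel

theorem heptagonPath_mem_fourArc (i : Fin 7) (j : Fin 3) :
    heptagonPath (by decide) i j ∈ fourArc i := by
  decide +revert

theorem heptagonPath_mem_twoEdges_iff (i : Fin 7) (j : Fin 4) :
    heptagonPath (by decide) (i + 4) j ∈ twoEdges i ↔ j = 0 ∨ j = 3 := by
  decide +revert

theorem exists_adj_notMem_fourArc (i : Fin 7) :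
    ∃ j ∈ fourArc i, ∃ k ∉ fourArc i, C7.Adj j k := by
  decide +revert

theorem exists_adj_notMem_twoEdges (i : Fin 7) :
    ∃ j ∈ twoEdges i, ∃ k ∉ twoEdges i, C7.Adj j k := by
  decide +revert

end Heptagon

section Trace

variable {V W : Type*} {G : SimpleGraph V}

open Classical in
/-- The trace of a vertex `w` of `G` on an induced copy `φ` of a finite graph `H`: the set of
vertices of `H` whose image under `φ` is adjacent to `w`. -/
noncomputable def traceOn [Fintype W] {H : SimpleGraph W} (φ : H ↪g G) (w : V) : Finset W :=
  {i | G.Adj w (φ i)}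

theorem mem_traceOn [Fintype W] {H : SimpleGraph W} {φ : H ↪g G} {w : V} {i : W} :
    i ∈ traceOn φ w ↔ G.Adj w (φ i) := by
  simp [traceOn]

theorem adj_of_traceOn_eq_of_free_claw [Fintype W] {H : SimpleGraph W} {φ : H ↪g G}
    (hclaw : _root_.Free G claw) {x y : V} (hx : x ∉ Set.range φ) (hy : y ∉ Set.range φ)
    (hxy : x ≠ y) {N : Finset W} (hxN : traceOn φ x = N) (hyN : traceOn φ y = N)
    (hexit : ∃ i ∈ N, ∃ j ∉ N, H.Adj i j) : G.Adj x y := by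
  obtain ⟨i, hi, j, hj, hij⟩ := hexit
  have mem_clique {z : V} (hz : z ∉ Set.range φ) (hzN : traceOn φ z = N) :
      z ∈ {z | G.Adj (φ i) z ∧ φ j ≠ z ∧ ¬ G.Adj (φ j) z} := by
    rw [← hzN, mem_traceOn] at hi hj
    exact ⟨hi.symm, fun h => hz ⟨j, h⟩, fun h => hj h.symm⟩
  exact isClique_of_free_claw hclaw (φ.map_adj_iff.2 hij) (mem_clique hx hxN) (mem_clique hy hyN)
    hxy

variable (φ : C7 ↪g G)

theorem exists_traceOn_eq_fourArc_or_twoEdges (hclaw : _root_.Free G claw)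
    (h4K1 : _root_.Free G fourK1) (hP5t : _root_.Free G P5twin) {w : V} (hw : w ∉ Set.range φ) :
    ∃ i, traceOn φ w = fourArc i ∨ traceOn φ w = twoEdges i := by
  have hpath {n : ℕ} (hn : n ≤ 6) (i : Fin 7) : w ∉ Set.range (φ.comp (heptagonPath hn i)) :=
    fun ⟨j, hj⟩ => hw ⟨_, hj⟩
  apply eq_fourArc_or_eq_twoEdges <;> intro i <;> simp only [mem_traceOn]
  · simpa using adj_zero_or_two_of_free_claw hclaw _ (hpath (n := 3) (by decide) i)
  · simpa using not_adj_zero_two_four_of_free_claw hclaw (φ.comp (heptagonPath (by decide) i)) w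
  · simpa using adj_zero_or_two_or_four_of_free_fourK1 h4K1 _ (hpath (by decide) i)
  · simpa using adj_zero_or_four_of_free_P5twin hP5t (φ.comp (heptagonPath (by decide) i)) (w := w)

theorem isIndepSet_traceOn_eq_fourArc (hK5e : _root_.Free G K5e) (i : Fin 7) :
    G.IsIndepSet {x | traceOn φ x = fourArc i} := by
  refine (isIndepSet_of_free_K5e hK5e (φ.comp (heptagonPath (by decide) i))).mono ?_
  intro x (hx : traceOn φ x = fourArc i) j
  have hj := heptagonPath_mem_fourArc i j
  rwa [← hx, mem_traceOn] at hj

theorem isIndepSet_traceOn_eq_twoEdges (hC5t : _root_.Free G C5twin) (i : Fin 7) :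
    G.IsIndepSet {x | traceOn φ x = twoEdges i} := by
  refine (isIndepSet_of_free_C5twin hC5t (φ.comp (heptagonPath (by decide) (i + 4)))).mono ?_
  intro x (hx : traceOn φ x = twoEdges i) j
  rw [← heptagonPath_mem_twoEdges_iff i, ← hx, mem_traceOn]
  rfl

theorem injOn_traceOn (hclaw : _root_.Free G claw) (h4K1 : _root_.Free G fourK1)
    (hK5e : _root_.Free G K5e) (hC5t : _root_.Free G C5twin) (hP5t : _root_.Free G P5twin) :
    Set.InjOn (traceOn φ) (Set.range φ)ᶜ := by
  intro x hx y hy hxy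
  by_contra hne
  obtain ⟨i, hxi | hxi⟩ := exists_traceOn_eq_fourArc_or_twoEdges φ hclaw h4K1 hP5t hx
  all_goals have hyi := hxy.symm.trans hxi
  · exact isIndepSet_traceOn_eq_fourArc φ hK5e i hxi hyi hne
      (adj_of_traceOn_eq_of_free_claw hclaw hx hy hne hxi hyi (exists_adj_notMem_fourArc i))
  · exact isIndepSet_traceOn_eq_twoEdges φ hC5t i hxi hyi hne
      (adj_of_traceOn_eq_of_free_claw hclaw hx hy hne hxi hyi (exists_adj_notMem_twoEdges i))

theorem encard_compl_range_le (hclaw : _root_.Free G claw) (h4K1 : _root_.Free G fourK1)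
    (hK5e : _root_.Free G K5e) (hC5t : _root_.Free G C5twin) (hP5t : _root_.Free G P5twin) :
    (Set.range φ)ᶜ.encard ≤ 14 := by
  let shapes : Finset (Finset (Fin 7)) := Finset.univ.image fourArc ∪ Finset.univ.image twoEdges
  have hmaps : Set.MapsTo (traceOn φ) (Set.range φ)ᶜ shapes := by
    intro w hw
    obtain ⟨i, hi | hi⟩ := exists_traceOn_eq_fourArc_or_twoEdges φ hclaw h4K1 hP5t hw <;>
      simp [shapes, hi]
  calc (Set.range φ)ᶜ.encard
      ≤ (shapes : Set (Finset (Fin 7))).encard :=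
        Set.encard_le_encard_of_injOn hmaps (injOn_traceOn φ hclaw h4K1 hK5e hC5t hP5t)
    _ = 14 := by rw [Set.encard_coe_eq_coe_finsetCard, show shapes.card = 14 by decide]; rfl

end Trace

theorem stmt_0_general {V : Type*} (G : SimpleGraph V)
    (hclaw : _root_.Free G claw) (h4K1 : _root_.Free G fourK1) (hK5e : _root_.Free G K5e)
    (hC5t : _root_.Free G C5twin) (hP5t : _root_.Free G P5twin) (hC7 : Nonempty (C7 ↪g G)) :
    ENat.card V ≤ 21 := by
  obtain ⟨φ⟩ := hC7
  have hrange : (Set.range φ).encard = 7 := by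
    rw [← Set.image_univ, φ.injective.encard_image, Set.encard_univ]
    simp
  calc ENat.card V
      = (Set.range φ).encard + (Set.range φ)ᶜ.encard := by
        rw [Set.encard_add_encard_compl, Set.encard_univ]
    _ ≤ 7 + 14 := add_le_add hrange.le (encard_compl_range_le φ hclaw h4K1 hK5e hC5t hP5t)
    _ = 21 := by norm_num

theorem stmt_0
    {V : Type*} [Fintype V] (G : SimpleGraph V)
    (hconn : G.Connected)
    (hclaw : _root_.Free G claw) (h4K1 : _root_.Free G fourK1) (hK5e : _root_.Free G K5e)
    (hW5 : _root_.Free G wheel5) (hC5t : _root_.Free G C5twin) (hP5t : _root_.Free G P5twin)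
    (hC7 : Nonempty (C7 ↪g G)) :
    Fintype.card V ≤ 21 := by
  have hcard := stmt_0_general G hclaw h4K1 hK5e hC5t hP5t hC7
  rwa [ENat.card_eq_coe_fintype_card, Nat.cast_le_ofNat] at hcard
end

section
/- No vertex of G outside the cycle C has exactly 1, exactly 3, or exactly 5 neighbors among the five vertices of C. -/
open SimpleGraph

/-!
Let `S` be the set of cycle vertices adjacent to `w`. If `w` sees `v i`, then claw-freeness at
`v i`, applied to `w` and the two nonadjacent cycle neighbours of `v i`, shows that `w` also sees
one of those. So no member of `S` is isolated in the subgraph induced on `S`, which excludes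
`|S| = 1`. If `|S| = 3`, then some member of `S` is adjacent to the other two, so `S` is a vertex of
the cycle together with its two neighbours and `w` is a true twin of it: a `C_5`-twin. If `|S| = 5`,
then `w` is the hub of a 5-wheel.
-/

section NoIsolatedMember

variable {U : Type*} {H : SimpleGraph U} {S : Set U}

theorem ncard_ne_one_of_forall_exists_adj (hS : ∀ i ∈ S, ∃ j ∈ S, H.Adj i j) : S.ncard ≠ 1 := by
  intro hcard
  obtain ⟨a, rfl⟩ := Set.ncard_eq_one.mp hcard
  simp at hS

theorem exists_subset_insert_neighborSet_of_ncard_eq_three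
    (hS : ∀ i ∈ S, ∃ j ∈ S, H.Adj i j) (hcard : S.ncard = 3) :
    ∃ i, S ⊆ insert i (H.neighborSet i) := by
  obtain ⟨a, b, c, -, -, -, rfl⟩ := Set.ncard_eq_three.mp hcard
  have ha : H.Adj a b ∨ H.Adj a c := by simpa using hS a
  have hb : H.Adj a b ∨ H.Adj b c := by simpa [H.adj_comm b a] using hS b
  have hc : H.Adj a c ∨ H.Adj b c := by simpa [H.adj_comm c] using hS c
  obtain ⟨hab, hac⟩ | ⟨hab, hbc⟩ | ⟨hac, hbc⟩ :
      (H.Adj a b ∧ H.Adj a c) ∨ (H.Adj a b ∧ H.Adj b c) ∨ (H.Adj a c ∧ H.Adj b c) := by tauto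
  · exact ⟨a, by simp [Set.insert_subset_iff, hab, hac]⟩
  · exact ⟨b, by simp [Set.insert_subset_iff, hab.symm, hbc]⟩
  · exact ⟨c, by simp [Set.insert_subset_iff, hac.symm, hbc.symm]⟩

end NoIsolatedMember

section CycleGraph

theorem not_isClique_neighborSet_cycleGraph {n : ℕ} (i : Fin (n + 4)) :
    ¬ (cycleGraph (n + 4)).IsClique ((cycleGraph (n + 4)).neighborSet i) := by
  have two_ne_zero : (1 : Fin (n + 4)) + 1 ≠ 0 := by
    simp [Fin.ext_iff, Fin.val_add, Nat.mod_eq_of_lt]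
  have two_ne_one : (1 : Fin (n + 4)) + 1 ≠ 1 := by simp
  have three_ne_zero : (1 : Fin (n + 4)) + 1 + 1 ≠ 0 := by
    simp [Fin.ext_iff, Fin.val_add, Nat.mod_eq_of_lt]
  have hsub : i + 1 - (i - 1) = 1 + 1 := by abel
  rw [cycleGraph_neighborSet, isClique_pair, cycleGraph_adj, ← neg_sub (i + 1), hsub,
    neg_eq_iff_add_eq_zero, Ne, eq_comm, ← sub_eq_zero, hsub]
  simp [two_ne_zero, two_ne_one, three_ne_zero]

theorem ncard_insert_neighborSet_cycleGraph {n : ℕ} (i : Fin (n + 3)) :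
    (insert i ((cycleGraph (n + 3)).neighborSet i)).ncard = 3 := by
  rw [Set.ncard_insert_of_notMem (by simp), Set.ncard_eq_toFinset_card', ← neighborFinset_def,
    card_neighborFinset_eq_degree, cycleGraph_degree_three_le]

/-- Translation by `i` as an automorphism of a cycle, used to move any cycle vertex into the role of
vertex `0` of a pattern. -/
def cycleGraphTranslate {n : ℕ} (i : Fin (n + 1)) :
    cycleGraph (n + 1) ≃g cycleGraph (n + 1) where
  toEquiv := Equiv.addRight i
  map_rel_iff' := by simp [cycleGraph_eq_circulantGraph]

end CycleGraph

section InducedSubgraph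

variable {V U : Type*} {G : SimpleGraph V} {H : SimpleGraph U} {w : V}

/-- The induced cycle given by a cyclic enumeration of its vertices; `ZMod (n + 2)` reduces to the
vertex type `Fin (n + 2)` of `cycleGraph (n + 2)`. -/
def cycleGraphEmbedding {n : ℕ} (v : ZMod (n + 2) → V) (hv : Function.Injective v)
    (hC : ∀ i j, G.Adj (v i) (v j) ↔ (j = i + 1 ∨ i = j + 1)) : cycleGraph (n + 2) ↪g G where
  toFun := v
  inj' := hv
  map_rel_iff' {i j} := by
    have hcycle (i j : ZMod (n + 2)) : j = i + 1 ∨ i = j + 1 ↔ i - j = 1 ∨ j - i = 1 := by grind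
    exact (hC i j).trans (hcycle i j)

/-- Extends an induced copy of `K`, the graph `H` minus its last vertex, by a vertex `w` of `G` that
is attached to the copy as the last vertex is attached to the rest of `H`. -/
def snocEmbedding {n : ℕ} {H : SimpleGraph (Fin (n + 1))} {K : SimpleGraph (Fin n)}
    (hK : H.comap Fin.castSucc = K) (f : K ↪g G) (hw : w ∉ Set.range f)
    (h : ∀ a, G.Adj w (f a) ↔ H.Adj (Fin.last n) a.castSucc) : H ↪g G where
  toEmbedding := Fin.Embedding.snoc f.toEmbedding hw
  map_rel_iff' {a b} := by
    subst hK
    have hf (a b) : G.Adj (f a) (f b) ↔ H.Adj a.castSucc b.castSucc := f.map_adj_iff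
    induction a using Fin.lastCases <;> induction b using Fin.lastCases <;>
      simp [h, hf, G.adj_comm _ w, H.adj_comm _ (Fin.last n)]

theorem adj_or_adj_or_adj_of_free_claw (hG : _root_.Free G claw) {x a b c : V}
    (ha : G.Adj x a) (hb : G.Adj x b) (hc : G.Adj x c) (hab : a ≠ b) (hac : a ≠ c) (hbc : b ≠ c) :
    G.Adj a b ∨ G.Adj a c ∨ G.Adj b c := by
  by_contra! hn
  obtain ⟨nab, nac, nbc⟩ := hn
  have hinj : Function.Injective ![x, a, b, c] := by
    simp [Function.Injective, Fin.forall_fin_succ, ha.ne, hb.ne, hc.ne, ha.ne', hb.ne', hc.ne',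
      hab, hac, hbc, hab.symm, hac.symm, hbc.symm]
  refine hG.false ⟨⟨![x, a, b, c], hinj⟩, fun {i j} => ?_⟩
  change G.Adj (![x, a, b, c] i) (![x, a, b, c] j) ↔ claw.Adj i j
  fin_cases i <;> fin_cases j <;>
    simp [claw, ha, hb, hc, ha.symm, hb.symm, hc.symm, nab, nac, nbc,
      G.adj_comm b a, G.adj_comm c a, G.adj_comm c b]

theorem exists_adj_adj_of_free_claw (hG : _root_.Free G claw) (f : H ↪g G)
    (hw : w ∉ Set.range f) {i : U} (hi : ¬ H.IsClique (H.neighborSet i)) (hwi : G.Adj w (f i)) :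
    ∃ j, G.Adj w (f j) ∧ H.Adj i j := by
  obtain ⟨j, hj, k, hk, hjk, hnadj⟩ :
      ∃ j, H.Adj i j ∧ ∃ k, H.Adj i k ∧ j ≠ k ∧ ¬ H.Adj j k := by
    simpa [IsClique, Set.Pairwise] using hi
  have hne : ∀ l, f l ≠ w := fun l hl => hw ⟨l, hl⟩
  obtain h | h | h := adj_or_adj_or_adj_of_free_claw hG (f.map_adj_iff.mpr hj)
    (f.map_adj_iff.mpr hk) hwi.symm (f.injective.ne hjk) (hne j) (hne k)
  · exact absurd (f.map_adj_iff.mp h) hnadj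
  · exact ⟨j, h.symm, hj⟩
  · exact ⟨k, h.symm, hk⟩

end InducedSubgraph

section InducedFiveCycle

variable {V : Type*} {G : SimpleGraph V} {w : V}

theorem comap_castSucc_C5twin : C5twin.comap Fin.castSucc = cycleGraph 5 := by
  ext a b
  revert a b
  simp only [C5twin, comap_adj, fromRel_adj]
  decide

theorem comap_castSucc_wheel5 : wheel5.comap Fin.castSucc = cycleGraph 5 := by
  ext a b
  revert a b
  simp only [wheel5, comap_adj, fromRel_adj]
  decide

theorem setOf_adj_ne_insert_neighborSet_of_free_C5twin (hG : _root_.Free G C5twin)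
    (C : cycleGraph 5 ↪g G) (hw : w ∉ Set.range C) (i : Fin 5) :
    {j | G.Adj w (C j)} ≠ insert i ((cycleGraph 5).neighborSet i) := by
  intro hS
  let C' : cycleGraph 5 ↪g G := C.comp (cycleGraphTranslate i).toEmbedding
  have hw' : w ∉ Set.range C' := fun ⟨a, ha⟩ => hw ⟨a + i, ha⟩
  have htwin (a : Fin 5) : G.Adj w (C' a) ↔ C5twin.Adj (Fin.last 5) a.castSucc := by
    refine (Set.ext_iff.mp hS (a + i)).trans ?_
    simp only [Set.mem_insert_iff, mem_neighborSet, C5twin, fromRel_adj]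
    clear * -
    revert i a
    decide
  exact hG.false (snocEmbedding comap_castSucc_C5twin C' hw' htwin)

theorem setOf_adj_ne_univ_of_free_wheel5 (hG : _root_.Free G wheel5) (C : cycleGraph 5 ↪g G)
    (hw : w ∉ Set.range C) : {j | G.Adj w (C j)} ≠ Set.univ := by
  intro hS
  have hhub (a : Fin 5) : G.Adj w (C a) ↔ wheel5.Adj (Fin.last 5) a.castSucc := by
    refine iff_of_true (Set.eq_univ_iff_forall.mp hS a) ?_
    simp only [wheel5, fromRel_adj]
    revert a
    decide
  exact hG.false (snocEmbedding comap_castSucc_wheel5 C hw hhub)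

theorem stmt_1_general (hclaw : _root_.Free G claw) (hW5 : _root_.Free G wheel5)
    (hC5t : _root_.Free G C5twin) (C : cycleGraph 5 ↪g G) (hw : w ∉ Set.range C) :
    {i | G.Adj w (C i)}.ncard ≠ 1 ∧ {i | G.Adj w (C i)}.ncard ≠ 3 ∧
      {i | G.Adj w (C i)}.ncard ≠ 5 := by
  have hS : ∀ i ∈ {i | G.Adj w (C i)}, ∃ j ∈ {i | G.Adj w (C i)}, (cycleGraph 5).Adj i j :=
    fun i => exists_adj_adj_of_free_claw hclaw C hw (not_isClique_neighborSet_cycleGraph i)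
  refine ⟨ncard_ne_one_of_forall_exists_adj hS, fun h3 => ?_, fun h5 => ?_⟩
  · obtain ⟨i, hi⟩ := exists_subset_insert_neighborSet_of_ncard_eq_three hS h3
    refine setOf_adj_ne_insert_neighborSet_of_free_C5twin hC5t C hw i ?_
    exact Set.eq_of_subset_of_ncard_le hi (by rw [ncard_insert_neighborSet_cycleGraph, h3])
  · refine setOf_adj_ne_univ_of_free_wheel5 hW5 C hw ?_
    rwa [Set.eq_univ_iff_ncard, Nat.card_fin]

end InducedFiveCycle

theorem stmt_1     {V : Type*} [Fintype V] (G : SimpleGraph V)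
    (hconn : G.Connected)
    (hclaw : _root_.Free G claw) (h4K1 : _root_.Free G fourK1) (hK5e : _root_.Free G K5e)
    (hW5 : _root_.Free G wheel5) (hC5t : _root_.Free G C5twin) (hP5t : _root_.Free G P5twin)
    (v : ZMod 5 → V) (hv : Function.Injective v)
    (hC : ∀ i j : ZMod 5, G.Adj (v i) (v j) ↔ (j = i + 1 ∨ i = j + 1)) :
    ∀ w : V, w ∉ Set.range v →
      {i : ZMod 5 | G.Adj w (v i)}.ncard ≠ 1 ∧
      {i : ZMod 5 | G.Adj w (v i)}.ncard ≠ 3 ∧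
      {i : ZMod 5 | G.Adj w (v i)}.ncard ≠ 5 :=
  fun _ hw => stmt_1_general hclaw hW5 hC5t (cycleGraphEmbedding v hv hC) hw
end

section
/- For every i, the set Y_i contains at most one vertex, i.e., there is at most one vertex outside C whose neighbors on C are exactly v_i, v_{i+1}, v_{i+2}, v_{i+3}. -/
open SimpleGraph

/-!
If `x ≠ y` both lie in `Y_i` and are non-adjacent, they form a claw with centre `v i` and third
leaf `v (i - 1)`. If they are adjacent, then `v (i + 1), x, y` is a triangle in the common
neighbourhood of the non-adjacent vertices `v i` and `v (i + 2)`, which gives `K_5 - e`.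
-/

section

variable {V : Type*} {G : SimpleGraph V}

theorem Free.not_forall_lt_ne_and_adj_iff {W : Type*} [LinearOrder W] {H : SimpleGraph W}
    (hG : _root_.Free G H) (f : W → V) :
    ¬ ∀ i j, i < j → f i ≠ f j ∧ (G.Adj (f i) (f j) ↔ H.Adj i j) := by
  intro hf
  refine hG.false ⟨⟨f, .of_lt_imp_ne fun i j hij => (hf i j hij).1⟩, fun {i j} => ?_⟩
  change G.Adj (f i) (f j) ↔ H.Adj i j
  rcases lt_trichotomy i j with hij | rfl | hji
  · exact (hf i j hij).2
  · simp only [SimpleGraph.irrefl]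
  · rw [G.adj_comm, H.adj_comm]
    exact (hf j i hji).2

theorem Free.compl_cliqueFreeOn_neighborSet (hG : _root_.Free G claw) (c : V) :
    Gᶜ.CliqueFreeOn (G.neighborSet c) 3 := by
  classical
  intro s hs hclique
  obtain ⟨x, y, z, hxy, hxz, hyz, rfl⟩ := is3Clique_iff.mp hclique
  have hcx : G.Adj c x := hs (by simp)
  have hcy : G.Adj c y := hs (by simp)
  have hcz : G.Adj c z := hs (by simp)
  rw [compl_adj] at hxy hxz hyz
  apply hG.not_forall_lt_ne_and_adj_iff ![c, x, y, z]
  simp [Fin.forall_fin_succ, claw, hcx, hcy, hcz, hcx.ne, hcy.ne, hcz.ne, hxy, hxz, hyz]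

theorem Free.cliqueFreeOn_commonNeighbors (hG : _root_.Free G K5e) {a b : V}
    (hab : Gᶜ.Adj a b) : G.CliqueFreeOn (G.commonNeighbors a b) 3 := by
  classical
  intro s hs hclique
  obtain ⟨x, y, z, hxy, hxz, hyz, rfl⟩ := is3Clique_iff.mp hclique
  obtain ⟨hax, hbx⟩ : G.Adj a x ∧ G.Adj b x := hs (by simp)
  obtain ⟨hay, hby⟩ : G.Adj a y ∧ G.Adj b y := hs (by simp)
  obtain ⟨haz, hbz⟩ : G.Adj a z ∧ G.Adj b z := hs (by simp)
  rw [compl_adj] at hab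
  apply hG.not_forall_lt_ne_and_adj_iff ![a, b, x, y, z]
  simp [Fin.forall_fin_succ, K5e, hab, hax, hbx, hay, hby, haz, hbz, hxy, hxz, hyz, hax.ne,
    hbx.ne, hay.ne, hby.ne, haz.ne, hbz.ne, hxy.ne, hxz.ne, hyz.ne]

theorem subsingleton_setOf_compl_adj_and_adj (hclaw : _root_.Free G claw)
    (hK5e : _root_.Free G K5e) {p a b c : V} (hap : G.Adj a p) (hab : G.Adj a b)
    (hcb : G.Adj c b) (hac : Gᶜ.Adj a c) :
    {w | Gᶜ.Adj p w ∧ G.Adj a w ∧ G.Adj b w ∧ G.Adj c w}.Subsingleton := by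
  classical
  rintro x ⟨hpx, hax, hbx, hcx⟩ y ⟨hpy, hay, hby, hcy⟩
  by_contra hne
  by_cases hxy : G.Adj x y
  · refine hK5e.cliqueFreeOn_commonNeighbors hac (t := {b, x, y}) ?_
      (is3Clique_triple_iff.mpr ⟨hbx, hby, hxy⟩)
    simp [Set.insert_subset_iff, mem_commonNeighbors, *]
  · refine hclaw.compl_cliqueFreeOn_neighborSet a (t := {p, x, y}) ?_
      (is3Clique_triple_iff.mpr ⟨hpx, hpy, (G.compl_adj x y).mpr ⟨hne, hxy⟩⟩)
    simp [Set.insert_subset_iff, *]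

theorem compl_adj_of_mem_cycY {v : ZMod 5 → V} {i : ZMod 5} {w : V} (hw : w ∈ cycY G v i) :
    Gᶜ.Adj (v (i + 4)) w := by
  have hne : v (i + 4) ≠ w := fun h => hw.1 ⟨i + 4, h⟩
  have hnot : ¬ G.Adj w (v (i + 4)) := by
    rw [hw.2]
    clear * -
    decide +revert
  exact (G.compl_adj _ _).mpr ⟨hne, fun h => hnot h.symm⟩

theorem stmt_2_general (hclaw : _root_.Free G claw) (hK5e : _root_.Free G K5e)
    {v : ZMod 5 → V} (hv : Function.Injective v)
    (hC : ∀ i j : ZMod 5, G.Adj (v i) (v j) ↔ (j = i + 1 ∨ i = j + 1)) (i : ZMod 5) :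
    (cycY G v i).Subsingleton := by
  have hadj₀₄ : G.Adj (v i) (v (i + 4)) := (hC _ _).mpr (by clear * -; decide +revert)
  have hadj₀₁ : G.Adj (v i) (v (i + 1)) := (hC _ _).mpr (.inl rfl)
  have hadj₂₁ : G.Adj (v (i + 2)) (v (i + 1)) := (hC _ _).mpr (by clear * -; decide +revert)
  have hnadj₀₂ : Gᶜ.Adj (v i) (v (i + 2)) := by
    rw [compl_adj, hC, hv.ne_iff]
    clear * -
    decide +revert
  refine (subsingleton_setOf_compl_adj_and_adj hclaw hK5e hadj₀₄ hadj₀₁ hadj₂₁ hnadj₀₂).anti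
    fun w hw => ?_
  refine ⟨compl_adj_of_mem_cycY hw, ?_, ?_, ?_⟩ <;> exact ((hw.2 _).mpr (by simp)).symm

end

theorem stmt_2     {V : Type*} [Fintype V] (G : SimpleGraph V)
    (hconn : G.Connected)
    (hclaw : _root_.Free G claw) (h4K1 : _root_.Free G fourK1) (hK5e : _root_.Free G K5e)
    (hW5 : _root_.Free G wheel5) (hC5t : _root_.Free G C5twin) (hP5t : _root_.Free G P5twin)
    (v : ZMod 5 → V) (hv : Function.Injective v)
    (hC : ∀ i j : ZMod 5, G.Adj (v i) (v j) ↔ (j = i + 1 ∨ i = j + 1)) :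
    ∀ i : ZMod 5, (cycY G v i).Subsingleton :=
  stmt_2_general hclaw hK5e hv hC
end

section
/- For every i, there is no edge between Y_i and Y_{i+1}: if y_1 is a vertex outside C whose neighbors on C are exactly v_i, v_{i+1}, v_{i+2}, v_{i+3}, and y_2 is a vertex outside C whose neighbors on C are exactly v_{i+1}, v_{i+2}, v_{i+3}, v_{i+4}, then y_1 and y_2 are non-adjacent. -/
open SimpleGraph

/-!
Two adjacent vertices `y₁, y₂` of `Y_i ∪ Y_{i+1}` would both see the induced path
`v (i+1), v (i+2), v (i+3)`. Then `v (i+2), y₁, y₂` is a triangle in the common neighbourhood of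
the distinct non-adjacent vertices `v (i+1)` and `v (i+3)`, and these five vertices induce
`K_5 - e`.
-/

section
variable {V : Type*} {G : SimpleGraph V} {a b c : V}

theorem cliqueFreeOn_commonNeighbors_of_free_K5e (hG : _root_.Free G K5e) (hne : a ≠ b)
    (hnadj : ¬ G.Adj a b) : G.CliqueFreeOn (G.commonNeighbors a b) 3 := by
  classical
  intro t ht hclique
  obtain ⟨x, y, z, hxy, hxz, hyz, rfl⟩ := is3Clique_iff.1 hclique
  obtain ⟨⟨hax, hbx⟩, ⟨hay, hby⟩, ⟨haz, hbz⟩⟩ :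
      x ∈ G.commonNeighbors a b ∧ y ∈ G.commonNeighbors a b ∧ z ∈ G.commonNeighbors a b := by
    simpa [Set.insert_subset_iff] using ht
  let f : Fin 5 → V := ![a, b, x, y, z]
  have hadj : ∀ {i j}, G.Adj (f i) (f j) ↔ K5e.Adj i j := by
    intro i j
    fin_cases i <;> fin_cases j <;> simp_all [f, K5e, G.adj_comm]
  have hinj : Function.Injective f := by
    intro i j hij
    by_contra hne_ij
    have hcases : K5e.Adj i j ∨ i = 0 ∧ j = 1 ∨ i = 1 ∧ j = 0 := by
      simp only [K5e, fromRel_adj]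
      lia
    rcases hcases with h | ⟨rfl, rfl⟩ | ⟨rfl, rfl⟩
    · exact (hadj.2 h).ne hij
    · exact hne hij
    · exact hne hij.symm
  exact hG.false ⟨⟨f, hinj⟩, hadj⟩

theorem isIndepSet_commonNeighbors_inter_neighborSet_of_free_K5e (hG : _root_.Free G K5e)
    (hab : G.Adj a b) (hbc : G.Adj b c) (hne : a ≠ c) (hnadj : ¬ G.Adj a c) :
    G.IsIndepSet (G.commonNeighbors a c ∩ G.neighborSet b) := by
  classical
  rintro x ⟨hx, hbx⟩ y ⟨hy, hby⟩ - hxy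
  have htriangle : G.IsNClique 3 {b, x, y} := is3Clique_triple_iff.2 ⟨hbx, hby, hxy⟩
  have hsubset : (({b, x, y} : Finset V) : Set V) ⊆ G.commonNeighbors a c := by
    simp [Set.insert_subset_iff, hx, hy, mem_commonNeighbors, hab, hbc.symm]
  exact cliqueFreeOn_commonNeighbors_of_free_K5e hG hne hnadj hsubset htriangle

theorem cycY_union_cycY_add_one_subset (v : ZMod 5 → V) (i : ZMod 5) :
    cycY G v i ∪ cycY G v (i + 1) ⊆
      G.commonNeighbors (v (i + 1)) (v (i + 3)) ∩ G.neighborSet (v (i + 2)) := by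
  rintro w (⟨-, hw⟩ | ⟨-, hw⟩) <;>
    simp only [Set.mem_inter_iff, mem_commonNeighbors, mem_neighborSet, G.adj_comm _ w, hw,
      add_assoc, add_right_inj, add_eq_left] <;>
    decide

theorem stmt_3_general (hK5e : _root_.Free G K5e) (v : ZMod 5 → V)
    (hC : ∀ i j : ZMod 5, G.Adj (v i) (v j) ↔ (j = i + 1 ∨ i = j + 1)) (i : ZMod 5) :
    G.IsIndepSet (cycY G v i ∪ cycY G v (i + 1)) := by
  have hadj : ∀ j k, G.Adj (v (i + j)) (v (i + k)) ↔ k = j + 1 ∨ j = k + 1 := by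
    simp [hC, add_assoc]
  have h12 : G.Adj (v (i + 1)) (v (i + 2)) := (hadj 1 2).2 (by decide)
  have h23 : G.Adj (v (i + 2)) (v (i + 3)) := (hadj 2 3).2 (by decide)
  have h34 : G.Adj (v (i + 3)) (v (i + 4)) := (hadj 3 4).2 (by decide)
  have h13 : ¬ G.Adj (v (i + 1)) (v (i + 3)) := (hadj 1 3).not.2 (by decide)
  have h14 : ¬ G.Adj (v (i + 1)) (v (i + 4)) := (hadj 1 4).not.2 (by decide)
  have hne : v (i + 1) ≠ v (i + 3) := (G.ne_of_adj_of_not_adj h34 h14).symm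
  exact (isIndepSet_commonNeighbors_inter_neighborSet_of_free_K5e hK5e h12 h23 hne h13).mono
    (cycY_union_cycY_add_one_subset v i)

end

theorem stmt_3     {V : Type*} [Fintype V] (G : SimpleGraph V)
    (hconn : G.Connected)
    (hclaw : _root_.Free G claw) (h4K1 : _root_.Free G fourK1) (hK5e : _root_.Free G K5e)
    (hW5 : _root_.Free G wheel5) (hC5t : _root_.Free G C5twin) (hP5t : _root_.Free G P5twin)
    (v : ZMod 5 → V) (hv : Function.Injective v)
    (hC : ∀ i j : ZMod 5, G.Adj (v i) (v j) ↔ (j = i + 1 ∨ i = j + 1)) :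
    ∀ i : ZMod 5, ∀ y₁ ∈ cycY G v i, ∀ y₂ ∈ cycY G v (i + 1), ¬ G.Adj y₁ y₂ := by
  intro i y₁ h₁ y₂ h₂ hadj
  exact stmt_3_general hK5e v hC i (.inl h₁) (.inr h₂) hadj.ne hadj
end

section
/- For every i, every vertex of X_i is adjacent to every vertex of Y_i and to every vertex of Y_{i+3}. -/
open SimpleGraph

/-!
For an edge `cd` of a claw-free graph, the neighbours of `c` outside the closed neighbourhood of `d`
form a clique, since two nonadjacent ones would be the leaves, together with `d`, of a claw centred
at `c`. The members of `X_i` and of `Y_i` are such vertices for the edge `v_i v_{i-1}`, those of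
`X_i` and of `Y_{i+3}` for the edge `v_{i+1} v_{i+2}`.
-/

/-- The private neighbours of `c` with respect to `d`: the neighbours of `c` lying outside the
closed neighbourhood of `d`. -/
def privateNeighborSet {V : Type*} (G : SimpleGraph V) (c d : V) : Set V :=
  {w | G.Adj w c ∧ ¬ G.Adj w d ∧ w ≠ d}

section ClawFree

variable {V : Type*} {G : SimpleGraph V}

/-- The embedding of the claw in `G` with centre `c` and pairwise nonadjacent leaves `leaf`. -/
def clawEmbedding {c : V} {leaf : Fin 3 → V} (hleaf : Function.Injective leaf)
    (hadj : ∀ p, G.Adj c (leaf p)) (hindep : ∀ p q, ¬ G.Adj (leaf p) (leaf q)) : claw ↪g G where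
  toFun := Fin.cons c leaf
  inj' := Fin.cons_injective_iff.2 ⟨fun ⟨p, hp⟩ => (hadj p).ne hp.symm, hleaf⟩
  map_rel_iff' {p q} := by
    cases p using Fin.cases <;> cases q using Fin.cases <;>
      simp [claw, hadj, (hadj _).symm, hindep, (Fin.succ_ne_zero _).symm]

theorem isClique_privateNeighborSet (hclaw : _root_.Free G claw) {c d : V} (hcd : G.Adj c d) :
    G.IsClique (privateNeighborSet G c d) := by
  rintro a ⟨hac, had, had_ne⟩ b ⟨hbc, hbd, hbd_ne⟩ hab_ne
  by_contra hab
  have hinj : Function.Injective ![a, b, d] := by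
    simp [Function.Injective, Fin.forall_fin_succ, hab_ne, had_ne, hbd_ne, hab_ne.symm, had_ne.symm,
      hbd_ne.symm]
  have hadj : ∀ p, G.Adj c (![a, b, d] p) := by
    simp [Fin.forall_fin_succ, hac.symm, hbc.symm, hcd]
  have hindep : ∀ p q, ¬ G.Adj (![a, b, d] p) (![a, b, d] q) := by
    simp [Fin.forall_fin_succ, hab, had, hbd, mt Adj.symm hab, mt Adj.symm had, mt Adj.symm hbd]
  exact hclaw.false (clawEmbedding hinj hadj hindep)

theorem disjoint_cycX_cycY (v : ZMod 5 → V) (i k : ZMod 5) :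
    Disjoint (cycX G v i) (cycY G v k) := by
  have exists_index : ∀ i k : ZMod 5,
      ∃ j, (j = k ∨ j = k + 1 ∨ j = k + 2 ∨ j = k + 3) ∧ ¬ (j = i ∨ j = i + 1) := by
    decide
  refine Set.disjoint_left.2 fun _ ⟨_, hX⟩ ⟨_, hY⟩ => ?_
  obtain ⟨j, hjY, hjX⟩ := exists_index i k
  exact hjX ((hX j).1 ((hY j).2 hjY))

theorem cycX_subset_privateNeighborSet {v : ZMod 5 → V} {i k l : ZMod 5}
    (hk : k = i ∨ k = i + 1) (hl : ¬ (l = i ∨ l = i + 1)) :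
    cycX G v i ⊆ privateNeighborSet G (v k) (v l) :=
  fun _ ⟨hw, hX⟩ => ⟨(hX k).2 hk, mt (hX l).1 hl, fun h => hw ⟨l, h.symm⟩⟩

theorem cycY_subset_privateNeighborSet {v : ZMod 5 → V} {i k l : ZMod 5}
    (hk : k = i ∨ k = i + 1 ∨ k = i + 2 ∨ k = i + 3)
    (hl : ¬ (l = i ∨ l = i + 1 ∨ l = i + 2 ∨ l = i + 3)) :
    cycY G v i ⊆ privateNeighborSet G (v k) (v l) :=
  fun _ ⟨hw, hY⟩ => ⟨(hY k).2 hk, mt (hY l).1 hl, fun h => hw ⟨l, h.symm⟩⟩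

theorem adj_of_mem_cycX_of_mem_cycY (hclaw : _root_.Free G claw) {v : ZMod 5 → V}
    {i j k l : ZMod 5} (hkl : G.Adj (v k) (v l))
    (hkX : k = i ∨ k = i + 1) (hlX : ¬ (l = i ∨ l = i + 1))
    (hkY : k = j ∨ k = j + 1 ∨ k = j + 2 ∨ k = j + 3)
    (hlY : ¬ (l = j ∨ l = j + 1 ∨ l = j + 2 ∨ l = j + 3))
    {x y : V} (hx : x ∈ cycX G v i) (hy : y ∈ cycY G v j) : G.Adj x y :=
  isClique_privateNeighborSet hclaw hkl (cycX_subset_privateNeighborSet hkX hlX hx)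
    (cycY_subset_privateNeighborSet hkY hlY hy) ((disjoint_cycX_cycY v i j).ne_of_mem hx hy)

theorem stmt_4_general (hclaw : _root_.Free G claw) (v : ZMod 5 → V)
    (hcycle : ∀ j, G.Adj (v j) (v (j + 1))) :
    ∀ i : ZMod 5, ∀ x ∈ cycX G v i, ∀ y ∈ cycY G v i ∪ cycY G v (i + 3), G.Adj x y := by
  rintro i x hx y (hy | hy)
  · have hedge : G.Adj (v i) (v (i - 1)) := by
      simpa only [sub_add_cancel] using (hcycle (i - 1)).symm
    refine adj_of_mem_cycX_of_mem_cycY hclaw hedge ?_ ?_ ?_ ?_ hx hy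
    all_goals clear * -; decide +revert
  · have hedge : G.Adj (v (i + 1)) (v (i + 2)) := by
      simpa only [add_assoc, one_add_one_eq_two] using hcycle (i + 1)
    refine adj_of_mem_cycX_of_mem_cycY hclaw hedge ?_ ?_ ?_ ?_ hx hy
    all_goals clear * -; decide +revert

end ClawFree

theorem stmt_4     {V : Type*} [Fintype V] (G : SimpleGraph V)
    (hconn : G.Connected)
    (hclaw : _root_.Free G claw) (h4K1 : _root_.Free G fourK1) (hK5e : _root_.Free G K5e)
    (hW5 : _root_.Free G wheel5) (hC5t : _root_.Free G C5twin) (hP5t : _root_.Free G P5twin)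
    (v : ZMod 5 → V) (hv : Function.Injective v)
    (hC : ∀ i j : ZMod 5, G.Adj (v i) (v j) ↔ (j = i + 1 ∨ i = j + 1)) :
    ∀ i : ZMod 5, ∀ x ∈ cycX G v i, ∀ y ∈ cycY G v i ∪ cycY G v (i + 3), G.Adj x y :=
  stmt_4_general hclaw v fun j => (hC j (j + 1)).2 (Or.inl rfl)
end

section
/- There is no edge between R and Y: no vertex of G with no neighbor on the cycle C is adjacent to a vertex outside C having exactly four neighbors on C of the form v_i, v_{i+1}, v_{i+2}, v_{i+3}. -/
open SimpleGraph

/-! In a claw-free graph, if `r` and `y` are adjacent then `N(y) \ N[r]` is a clique: two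
nonadjacent vertices in it would form a claw with `y` and `r`. If `r` sees nothing of the cycle
while `y` sees `v i, …, v (i + 3)`, then `N(y) \ N[r]` contains the nonadjacent pair
`v i`, `v (i + 2)`. -/

theorem claw_eq_starGraph : claw = starGraph 0 := rfl

section

variable {V : Type*} {G : SimpleGraph V} {r y : V}

theorem not_isNIndepSet_of_free_starGraph {n : ℕ} {s : Finset V}
    (hfree : _root_.Free G (starGraph (0 : Fin (n + 1)))) (hs : ↑s ⊆ G.neighborSet y) :
    ¬ G.IsNIndepSet n s := by
  rintro ⟨hindep, hcard⟩
  let leaf : Fin n ≃ s := (s.equivFinOfCardEq hcard).symm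
  have center_adj_leaf (i : Fin n) : G.Adj y (leaf i) := hs (leaf i).2
  have leaf_injective : Function.Injective fun i ↦ (leaf i : V) :=
    Subtype.val_injective.comp leaf.injective
  have not_adj_leaf (i j : Fin n) : ¬ G.Adj (leaf i) (leaf j) := fun hadj ↦
    hindep (leaf i).2 (leaf j).2 hadj.ne hadj
  let starEmbedding : Fin (n + 1) ↪ V :=
    ⟨Fin.cons y fun i ↦ (leaf i : V), Fin.cons_injective_iff.2
      ⟨fun ⟨i, hi⟩ ↦ (center_adj_leaf i).ne hi.symm, leaf_injective⟩⟩
  refine hfree.false ⟨starEmbedding, fun {i j} ↦ ?_⟩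
  cases i using Fin.cases <;> cases j using Fin.cases <;>
    simp [starEmbedding, center_adj_leaf, not_adj_leaf, (center_adj_leaf _).symm,
      (Fin.succ_ne_zero _).symm]

theorem isClique_neighborSet_diff_of_free_claw (hclaw : _root_.Free G claw) (hyr : G.Adj y r) :
    G.IsClique (G.neighborSet y \ insert r (G.neighborSet r)) := by
  classical
  rintro a ⟨hya, har⟩ b ⟨hyb, hbr⟩ hab
  obtain ⟨har_ne, hra⟩ : a ≠ r ∧ ¬ G.Adj r a := by simpa using har
  obtain ⟨hbr_ne, hrb⟩ : b ≠ r ∧ ¬ G.Adj r b := by simpa using hbr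
  by_contra hnadj
  have neighbors : ↑({r, a, b} : Finset V) ⊆ G.neighborSet y := by
    simp_all [Set.insert_subset_iff]
  have independent : G.IsNIndepSet 3 {r, a, b} := by
    rw [← isNClique_compl, is3Clique_triple_iff]
    simp_all [compl_adj, ne_comm]
  exact not_isNIndepSet_of_free_starGraph (claw_eq_starGraph ▸ hclaw) neighbors independent

end

theorem stmt_7_general {V : Type*} (G : SimpleGraph V) (hclaw : _root_.Free G claw)
    (v : ZMod 5 → V) (hv : Function.Injective v)
    (hC : ∀ i j : ZMod 5, G.Adj (v i) (v j) ↔ (j = i + 1 ∨ i = j + 1)) :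
    ∀ r ∈ cycR G v, ∀ y ∈ ⋃ i : ZMod 5, cycY G v i, ¬ G.Adj r y := by
  rintro r ⟨hr_range, hr_nadj⟩ y hy hry
  obtain ⟨i, -, hy_adj⟩ := Set.mem_iUnion.1 hy
  have mem_diff {j : ZMod 5} (hj : G.Adj y (v j)) :
      v j ∈ G.neighborSet y \ insert r (G.neighborSet r) :=
    ⟨hj, by rintro (rfl | hrj); exacts [hr_range ⟨j, rfl⟩, hr_nadj j hrj]⟩
  have not_consecutive : ∀ j : ZMod 5, j ≠ j + 2 ∧ ¬ (j + 2 = j + 1 ∨ j = j + 2 + 1) := by decide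
  have hne : v i ≠ v (i + 2) := hv.ne (not_consecutive i).1
  have hnadj : ¬ G.Adj (v i) (v (i + 2)) := (hC _ _).not.2 (not_consecutive i).2
  have hadj : G.Adj (v i) (v (i + 2)) := isClique_neighborSet_diff_of_free_claw hclaw hry.symm
    (mem_diff <| (hy_adj i).2 (by simp)) (mem_diff <| (hy_adj (i + 2)).2 (by simp)) hne
  exact hnadj hadj

theorem stmt_7     {V : Type*} [Fintype V] (G : SimpleGraph V)
    (hconn : G.Connected)
    (hclaw : _root_.Free G claw) (h4K1 : _root_.Free G fourK1) (hK5e : _root_.Free G K5e)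
    (hW5 : _root_.Free G wheel5) (hC5t : _root_.Free G C5twin) (hP5t : _root_.Free G P5twin)
    (v : ZMod 5 → V) (hv : Function.Injective v)
    (hC : ∀ i j : ZMod 5, G.Adj (v i) (v j) ↔ (j = i + 1 ∨ i = j + 1)) :
    ∀ r ∈ cycR G v, ∀ y ∈ ⋃ i : ZMod 5, cycY G v i, ¬ G.Adj r y :=
  stmt_7_general G hclaw v hv hC
end

section
/- The set R induces a clique in G: any two distinct vertices of G outside C having no neighbor on C are adjacent. -/
open SimpleGraph

/-!
Two nonadjacent vertices of the cycle form an independent set that sends no edge to `R`, so two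
nonadjacent vertices of `R` would extend it to an induced `4K₁`.
-/

section IndepSet

variable {V : Type*} {G : SimpleGraph V} {m n : ℕ}

lemma isNIndepSet_pair [DecidableEq V] {u w : V} (hne : u ≠ w) (huw : ¬ G.Adj u w) :
    G.IsNIndepSet 2 {u, w} where
  isIndepSet := by simp [Set.pairwise_insert, huw, G.adj_comm w u]
  card_eq := Finset.card_pair hne

lemma isNIndepSet_disjUnion {s t : Finset V} (hs : G.IsNIndepSet m s) (ht : G.IsNIndepSet n t)
    (hdisj : Disjoint s t) (hst : ∀ u ∈ s, ∀ w ∈ t, ¬ G.Adj u w) :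
    G.IsNIndepSet (m + n) (s.disjUnion t hdisj) where
  isIndepSet := by
    rw [Finset.coe_disjUnion]
    refine Set.pairwise_union.2 ⟨hs.isIndepSet, ht.isIndepSet, fun u hu w hw _ ↦ ?_⟩
    exact ⟨hst u hu w hw, fun hwu ↦ hst u hu w hw hwu.symm⟩
  card_eq := by rw [Finset.card_disjUnion, hs.card_eq, ht.card_eq]

lemma indepSetFreeOn_of_forall_not_adj {s : Finset V} {t : Set V}
    (hG : G.IndepSetFree (m + n)) (hs : G.IsNIndepSet m s) (hdisj : Disjoint ↑s t)
    (hst : ∀ u ∈ s, ∀ w ∈ t, ¬ G.Adj u w) : G.IndepSetFreeOn t n := fun _ hrt hr ↦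
  hG _ <| isNIndepSet_disjUnion hs hr (Finset.disjoint_coe.1 <| hdisj.mono_right hrt)
    fun u hu w hw ↦ hst u hu w (hrt hw)

lemma isClique_of_indepSetFreeOn_two {t : Set V} (ht : G.IndepSetFreeOn t 2) : G.IsClique t := by
  classical
  intro u hu w hw hne
  by_contra huw
  exact ht (by simp [Set.pair_subset hu hw]) (isNIndepSet_pair hne huw)

lemma bot_isIndContained_iff_not_indepSetFree :
    (⊥ : SimpleGraph (Fin n)) ⊴ G ↔ ¬ G.IndepSetFree n := by
  rw [← cliqueFree_compl, not_cliqueFree_iff_top_isContained,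
    ← top_isIndContained_iff_top_isContained, ← compl_bot, compl_isIndContained_compl]

end IndepSet

theorem stmt_9_general {V : Type*} (G : SimpleGraph V) (h4K1 : _root_.Free G fourK1)
    (v : ZMod 5 → V) (hv : Function.Injective v)
    (hC : ∀ i j : ZMod 5, G.Adj (v i) (v j) ↔ (j = i + 1 ∨ i = j + 1)) :
    G.IsClique (cycR G v) := by
  classical
  have h_free : G.IndepSetFree (2 + 2) := by
    by_contra h
    exact not_isEmpty_iff.2 (bot_isIndContained_iff_not_indepSetFree.2 h) h4K1
  have h_pair : G.IsNIndepSet 2 {v 0, v 2} :=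
    isNIndepSet_pair (hv.ne (by decide)) (by rw [hC]; decide)
  have h_cycle : ∀ u ∈ ({v 0, v 2} : Finset V), u ∈ Set.range v := by simp
  refine isClique_of_indepSetFreeOn_two (indepSetFreeOn_of_forall_not_adj h_free h_pair ?_ ?_)
  · exact Set.disjoint_left.2 fun u hu hu_R ↦ hu_R.1 (h_cycle u hu)
  · intro u hu w hw huw
    obtain ⟨i, rfl⟩ := h_cycle u hu
    exact hw.2 i huw.symm

theorem stmt_9     {V : Type*} [Fintype V] (G : SimpleGraph V)
    (hconn : G.Connected)
    (hclaw : _root_.Free G claw) (h4K1 : _root_.Free G fourK1) (hK5e : _root_.Free G K5e)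
    (hW5 : _root_.Free G wheel5) (hC5t : _root_.Free G C5twin) (hP5t : _root_.Free G P5twin)
    (v : ZMod 5 → V) (hv : Function.Injective v)
    (hC : ∀ i j : ZMod 5, G.Adj (v i) (v j) ↔ (j = i + 1 ∨ i = j + 1)) :
    G.IsClique (cycR G v) :=
  stmt_9_general G h4K1 v hv hC
end

section
/- For every i, every vertex of R is adjacent to every vertex of X_i. -/
open SimpleGraph

/-! In a graph without an independent set of size `n + 1`, every independent set of size `n` is
dominating. A vertex `x` of `X_i` forms an independent triple with `v (i + 2)` and `v (i + 4)`, so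
a vertex of `R`, which has no neighbour on the cycle, must be adjacent to `x`. -/

section

variable {V : Type*} {G : SimpleGraph V}

theorem free_bot_iff_indepSetFree {n : ℕ} :
    _root_.Free G (⊥ : SimpleGraph (Fin n)) ↔ G.IndepSetFree n := by
  rw [← cliqueFree_compl, ← not_iff_not, not_cliqueFree_iff_top_isContained,
    ← top_isIndContained_iff_top_isContained, ← compl_bot, IsIndContained,
    ← Embedding.complEquiv.nonempty_congr, _root_.Free, not_isEmpty_iff]

theorem exists_adj_of_isNIndepSet_of_indepSetFree_succ {n : ℕ} {s : Finset V} {a : V}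
    (hs : G.IsNIndepSet n s) (hG : G.IndepSetFree (n + 1)) (ha : a ∉ s) :
    ∃ b ∈ s, G.Adj a b := by
  classical
  by_contra! hnadj
  have hclique : Gᶜ.IsNClique (n + 1) (insert a s) :=
    ((isNClique_compl G).2 hs).insert fun b hb =>
      (compl_adj G a b).2 ⟨(ne_of_mem_of_not_mem hb ha).symm, hnadj b hb⟩
  exact hG _ ((isNClique_compl G).1 hclique)

variable {v : ZMod 5 → V} {i j : ZMod 5} {x : V}

theorem compl_adj_of_mem_cycX (hx : x ∈ cycX G v i) (hj : j ≠ i) (hj' : j ≠ i + 1) :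
    Gᶜ.Adj x (v j) :=
  (compl_adj G x (v j)).2 ⟨fun h => hx.1 ⟨j, h.symm⟩, fun h => ((hx.2 j).1 h).elim hj hj'⟩

theorem disjoint_cycR_cycX : Disjoint (cycR G v) (cycX G v i) :=
  Set.disjoint_left.2 fun _ hr hx => hr.2 i ((hx.2 i).2 (.inl rfl))

theorem compl_adj_add_two_of_fiveCycle (hv : Function.Injective v)
    (hC : ∀ i j : ZMod 5, G.Adj (v i) (v j) ↔ (j = i + 1 ∨ i = j + 1)) (i : ZMod 5) :
    Gᶜ.Adj (v i) (v (i + 2)) := by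
  rw [compl_adj, hC, hv.ne_iff]
  decide +revert

theorem isNIndepSet_of_mem_cycX [DecidableEq V] (hv : Function.Injective v)
    (hC : ∀ i j : ZMod 5, G.Adj (v i) (v j) ↔ (j = i + 1 ∨ i = j + 1)) (hx : x ∈ cycX G v i) :
    G.IsNIndepSet 3 {x, v (i + 2), v (i + 4)} := by
  have hne₂ : ∀ i : ZMod 5, i + 2 ≠ i ∧ i + 2 ≠ i + 1 := by decide
  have hne₄ : ∀ i : ZMod 5, i + 4 ≠ i ∧ i + 4 ≠ i + 1 := by decide
  have hx₂ : Gᶜ.Adj x (v (i + 2)) := compl_adj_of_mem_cycX hx (hne₂ i).1 (hne₂ i).2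
  have hx₄ : Gᶜ.Adj x (v (i + 4)) := compl_adj_of_mem_cycX hx (hne₄ i).1 (hne₄ i).2
  have hcycle : Gᶜ.Adj (v (i + 2)) (v (i + 4)) := by
    convert compl_adj_add_two_of_fiveCycle hv hC (i + 2) using 2
    ring
  exact (isNClique_compl G).1 (is3Clique_triple_iff.2 ⟨hx₂, hx₄, hcycle⟩)

end

theorem stmt_10_general {V : Type*} (G : SimpleGraph V) (h4K1 : _root_.Free G fourK1)
    (v : ZMod 5 → V) (hv : Function.Injective v)
    (hC : ∀ i j : ZMod 5, G.Adj (v i) (v j) ↔ (j = i + 1 ∨ i = j + 1)) :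
    ∀ i : ZMod 5, ∀ r ∈ cycR G v, ∀ x ∈ cycX G v i, G.Adj r x := by
  classical
  intro i r hr x hx
  have hr_ne (j : ZMod 5) : r ≠ v j := fun h => hr.1 ⟨j, h.symm⟩
  have hr_notMem : r ∉ ({x, v (i + 2), v (i + 4)} : Finset V) := by
    simp [disjoint_cycR_cycX.ne_of_mem hr hx, hr_ne]
  obtain ⟨b, hb, hrb⟩ := exists_adj_of_isNIndepSet_of_indepSetFree_succ
    (isNIndepSet_of_mem_cycX hv hC hx) (free_bot_iff_indepSetFree.1 h4K1) hr_notMem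
  simp only [Finset.mem_insert, Finset.mem_singleton] at hb
  obtain rfl | rfl | rfl := hb
  · exact hrb
  · exact absurd hrb (hr.2 _)
  · exact absurd hrb (hr.2 _)

theorem stmt_10     {V : Type*} [Fintype V] (G : SimpleGraph V)
    (hconn : G.Connected)
    (hclaw : _root_.Free G claw) (h4K1 : _root_.Free G fourK1) (hK5e : _root_.Free G K5e)
    (hW5 : _root_.Free G wheel5) (hC5t : _root_.Free G C5twin) (hP5t : _root_.Free G P5twin)
    (v : ZMod 5 → V) (hv : Function.Injective v)
    (hC : ∀ i j : ZMod 5, G.Adj (v i) (v j) ↔ (j = i + 1 ∨ i = j + 1)) :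
    ∀ i : ZMod 5, ∀ r ∈ cycR G v, ∀ x ∈ cycX G v i, G.Adj r x :=
  stmt_10_general G h4K1 v hv hC
end

section
/- If R is non-empty, then G has at most 22 vertices or G contains a clique cutset. -/
open SimpleGraph

/-!
Read off the neighbours of a vertex outside the five-cycle: by claw-freeness no neighbour is
isolated on the cycle, three consecutive neighbours give the `C_5`-twin and five give the 5-wheel.
So every vertex lies on the cycle, in `R`, in some `X_i` or in some `Y_i`. Claw-freeness makes each
`Y_i` a clique and forbids edges between `R` and `Y_i`; since `v (i + 2)` and `v (i + 4)` are
nonadjacent and miss `R ∪ X_i`, `4K_1`-freeness makes `R ∪ X_i` a clique.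

In a `(K_5 - e)`-free graph the vertices complete to a clique of size at least three form a clique.
As `r ∈ R` and `v i` are nonadjacent and complete to `X_i`, this gives `|X_i| ≤ 2`; as `v i` and
`v (i + 2)` are nonadjacent and complete to `Y_i ∪ {v (i + 1)}`, it gives `|Y_i| ≤ 1`. If `|R| ≤ 2`,
there are at most `5 + 2 + 5 * 2 + 5 * 1 = 22` vertices. Otherwise `⋃ i, X_i` is complete to the
clique `R`, hence a clique, and it separates `R` from the cycle.
-/

section ForbiddenSubgraphs

variable {V W : Type*} {G : SimpleGraph V}

theorem not_free_of_forall_lt [LinearOrder W] {H : SimpleGraph W} (f : W → V)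
    (hne : ∀ i j, i < j → f i ≠ f j) (hadj : ∀ i j, i < j → (G.Adj (f i) (f j) ↔ H.Adj i j)) :
    ¬ _root_.Free G H := by
  intro hfree
  refine hfree.false ⟨⟨f, fun i j hij => ?_⟩, fun {i j} => ?_⟩
  · by_contra h
    rcases lt_or_gt_of_ne h with h | h
    exacts [hne i j h hij, hne j i h hij.symm]
  · rcases lt_trichotomy i j with h | rfl | h
    · exact hadj i j h
    · simp
    · rw [G.adj_comm, H.adj_comm]
      exact hadj j i h

theorem isClique_neighborSet_inter_compl_neighborSet (hclaw : _root_.Free G claw) {z w : V}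
    (hzw : G.Adj z w) : G.IsClique (G.neighborSet z ∩ Gᶜ.neighborSet w) := by
  rintro x ⟨hzx, hwx⟩ y ⟨hzy, hwy⟩ hxy
  by_contra hnxy
  rw [mem_neighborSet] at hzx hzy
  rw [mem_neighborSet, compl_adj] at hwx hwy
  refine not_free_of_forall_lt ![z, w, x, y] ?_ ?_ hclaw
  · simp [Fin.forall_fin_succ, hzw.ne, hzx.ne, hzy.ne, hwx.1, hwy.1, hxy]
  · simp [Fin.forall_fin_succ, claw, hzw, hzx, hzy, hwx.2, hwy.2, hnxy]

theorem isClique_compl_commonNeighbors (h4K1 : _root_.Free G fourK1) {u w : V}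
    (huw : Gᶜ.Adj u w) : G.IsClique (Gᶜ.commonNeighbors u w) := by
  rintro x ⟨hux, hwx⟩ y ⟨huy, hwy⟩ hxy
  by_contra hnxy
  simp only [mem_neighborSet, compl_adj] at huw hux hwx huy hwy
  refine not_free_of_forall_lt ![u, w, x, y] ?_ ?_ h4K1
  · simp [Fin.forall_fin_succ, huw.1, hux.1, hwx.1, huy.1, hwy.1, hxy]
  · simp [Fin.forall_fin_succ, fourK1, huw.2, hux.2, hwx.2, huy.2, hwy.2, hnxy]

theorem isClique_setOf_subset_neighborSet (hK5e : _root_.Free G K5e) {s : Set V}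
    (hs : G.IsClique s) (hcard : 2 < s.encard) : G.IsClique {x | s ⊆ G.neighborSet x} := by
  intro x hx y hy hxy
  by_contra hnxy
  obtain ⟨t, hts, ht⟩ := Set.exists_subset_encard_eq (Order.add_one_le_of_lt hcard)
  obtain ⟨a, b, c, hab, hac, hbc, rfl⟩ := Set.encard_eq_three.1 ht
  have ha : a ∈ s := hts (by simp)
  have hb : b ∈ s := hts (by simp)
  have hc : c ∈ s := hts (by simp)
  have hadj {z : V} (hz : s ⊆ G.neighborSet z) : G.Adj z a ∧ G.Adj z b ∧ G.Adj z c :=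
    ⟨hz ha, hz hb, hz hc⟩
  obtain ⟨hxa, hxb, hxc⟩ := hadj hx
  obtain ⟨hya, hyb, hyc⟩ := hadj hy
  refine not_free_of_forall_lt ![x, y, a, b, c] ?_ ?_ hK5e
  · simp [Fin.forall_fin_succ, hxy, hxa.ne, hxb.ne, hxc.ne, hya.ne, hyb.ne, hyc.ne, hab, hac, hbc]
  · simp +decide [Fin.forall_fin_succ, K5e, hnxy, hxa, hxb, hxc, hya, hyb, hyc, hs ha hb hab,
      hs ha hc hac, hs hb hc hbc]

end ForbiddenSubgraphs

theorem compl_adj_of_notMem_range {V ι : Type*} {G : SimpleGraph V} {v : ι → V} {w : V}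
    (hw : w ∉ Set.range v) {j : ι} (hwj : ¬ G.Adj w (v j)) : Gᶜ.Adj w (v j) :=
  (G.compl_adj _ _).2 ⟨fun h => hw ⟨j, h.symm⟩, hwj⟩

theorem not_preconnected_induce_of_forall_not_adj {V : Type*} {G : SimpleGraph V} {s t : Set V}
    (hinter : (s ∩ t).Nonempty) (hsdiff : (s \ t).Nonempty)
    (hadj : ∀ a ∈ s ∩ t, ∀ b ∈ s \ t, ¬ G.Adj a b) : ¬ (G.induce s).Preconnected := by
  intro hs
  obtain ⟨x, hxs, hxt⟩ := hinter
  obtain ⟨y, hys, hyt⟩ := hsdiff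
  obtain ⟨p⟩ := hs ⟨x, hxs⟩ ⟨y, hys⟩
  obtain ⟨d, -, hfst, hsnd⟩ := p.exists_boundary_dart {z | z.1 ∈ t} hxt hyt
  exact hadj d.fst ⟨d.fst.2, hfst⟩ d.snd ⟨d.snd.2, hsnd⟩ d.adj

/-- The vertices `v 0, …, v 4` form, in this cyclic order, an induced five-cycle of `G`.
Injectivity of `v` follows, see `IsInducedFiveCycle.injective`. -/
def IsInducedFiveCycle {V : Type*} (G : SimpleGraph V) (v : ZMod 5 → V) : Prop :=
  ∀ i j : ZMod 5, G.Adj (v i) (v j) ↔ (j = i + 1 ∨ i = j + 1)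

theorem eq_empty_or_eq_pair_or_eq_quadruple_of_no_isolated : ∀ s : Finset (ZMod 5),
    (∀ i ∈ s, i - 1 ∈ s ∨ i + 1 ∈ s) → (∀ i, s ≠ {i, i + 1, i + 4}) → s ≠ Finset.univ →
      s = ∅ ∨ (∃ i, s = {i, i + 1}) ∨ ∃ i, s = {i, i + 1, i + 2, i + 3} := by
  decide

namespace IsInducedFiveCycle

variable {V : Type*} {G : SimpleGraph V} {v : ZMod 5 → V}

theorem injective (hC : IsInducedFiveCycle G v) : Function.Injective v := by
  intro i j hij
  have hnbr : ∀ k, (k = i + 1 ∨ i = k + 1) ↔ (k = j + 1 ∨ j = k + 1) := fun k => by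
    rw [← hC, ← hC, hij]
  revert hnbr
  clear hij
  decide +revert

theorem rotate (hC : IsInducedFiveCycle G v) (i : ZMod 5) :
    IsInducedFiveCycle G fun j => v (i + j) := fun j k => by
  simp only [hC _ _, add_assoc, add_right_inj]

theorem compl_adj_iff (hC : IsInducedFiveCycle G v) (i j : ZMod 5) :
    Gᶜ.Adj (v i) (v j) ↔ j = i + 2 ∨ i = j + 2 := by
  rw [compl_adj, hC.injective.ne_iff, hC]
  decide +revert

theorem not_forall_adj (hC : IsInducedFiveCycle G v) (hW5 : _root_.Free G wheel5) (w : V) :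
    ¬ ∀ j, G.Adj w (v j) := by
  intro hadj
  refine not_free_of_forall_lt ![v 0, v 1, v 2, v 3, v 4, w] ?_ ?_ hW5
  · simp +decide [Fin.forall_fin_succ, hC.injective.eq_iff, fun j => (hadj j).ne']
  · simp +decide [Fin.forall_fin_succ, wheel5, hC _ _, fun j => (hadj j).symm]

theorem not_forall_adj_iff_twin (hC : IsInducedFiveCycle G v) (hC5t : _root_.Free G C5twin) {w : V}
    (hw : w ∉ Set.range v) : ¬ ∀ j, G.Adj w (v j) ↔ (j = 0 ∨ j = 1 ∨ j = 4) := by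
  intro hadj
  have hne (j : ZMod 5) : v j ≠ w := fun h => hw ⟨j, h⟩
  refine not_free_of_forall_lt ![v 0, v 1, v 2, v 3, v 4, w] ?_ ?_ hC5t
  · simp +decide [Fin.forall_fin_succ, hC.injective.eq_iff, hne]
  · simp +decide [Fin.forall_fin_succ, C5twin, hC _ _, G.adj_comm _ w, hadj]

theorem adj_sub_one_or_adj_add_one (hC : IsInducedFiveCycle G v) (hclaw : _root_.Free G claw)
    {w : V} (hw : w ∉ Set.range v) {i : ZMod 5} (hwi : G.Adj w (v i)) :
    G.Adj w (v (i - 1)) ∨ G.Adj w (v (i + 1)) := by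
  by_contra! h
  have hcompl : Gᶜ.Adj (v (i - 1)) (v (i + 1)) :=
    (hC.compl_adj_iff _ _).2 (by clear hwi h; decide +revert)
  exact hcompl.2 <| isClique_neighborSet_inter_compl_neighborSet hclaw hwi.symm
    ⟨(hC i (i - 1)).2 (by simp), compl_adj_of_notMem_range hw h.1⟩
    ⟨(hC i (i + 1)).2 (by simp), compl_adj_of_notMem_range hw h.2⟩ hcompl.1

theorem mem_cycR_or_mem_cycX_or_mem_cycY (hC : IsInducedFiveCycle G v)
    (hclaw : _root_.Free G claw) (hW5 : _root_.Free G wheel5) (hC5t : _root_.Free G C5twin)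
    {w : V} (hw : w ∉ Set.range v) :
    w ∈ cycR G v ∨ (∃ i, w ∈ cycX G v i) ∨ ∃ i, w ∈ cycY G v i := by
  classical
  let nbrs : Finset (ZMod 5) := {j | G.Adj w (v j)}
  have adj_iff {s : Finset (ZMod 5)} (hs : nbrs = s) (j : ZMod 5) : G.Adj w (v j) ↔ j ∈ s := by
    simp [← hs, nbrs]
  have no_isolated : ∀ i ∈ nbrs, i - 1 ∈ nbrs ∨ i + 1 ∈ nbrs := by
    simpa [nbrs] using fun i => hC.adj_sub_one_or_adj_add_one hclaw hw (i := i)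
  have no_triple (i : ZMod 5) : nbrs ≠ {i, i + 1, i + 4} := fun hs =>
    (hC.rotate i).not_forall_adj_iff_twin hC5t (fun ⟨j, hj⟩ => hw ⟨i + j, hj⟩)
      (by simp [adj_iff hs])
  have not_univ : nbrs ≠ Finset.univ := fun hs =>
    hC.not_forall_adj hW5 w (by simp [adj_iff hs])
  rcases eq_empty_or_eq_pair_or_eq_quadruple_of_no_isolated nbrs no_isolated no_triple not_univ with
    hs | ⟨i, hs⟩ | ⟨i, hs⟩
  · exact .inl ⟨hw, by simp [adj_iff hs]⟩
  · exact .inr (.inl ⟨i, hw, by simp [adj_iff hs]⟩)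
  · exact .inr (.inr ⟨i, hw, by simp [adj_iff hs]⟩)

theorem isClique_cycR_union_cycX (hC : IsInducedFiveCycle G v) (h4K1 : _root_.Free G fourK1)
    (i : ZMod 5) : G.IsClique (cycR G v ∪ cycX G v i) := by
  have hcompl : Gᶜ.Adj (v (i + 2)) (v (i + 4)) :=
    (hC.compl_adj_iff _ _).2 (by decide +revert)
  refine (isClique_compl_commonNeighbors h4K1 hcompl).subset ?_
  rintro w (hw | hw)
  · exact ⟨(compl_adj_of_notMem_range hw.1 (hw.2 _)).symm,
      (compl_adj_of_notMem_range hw.1 (hw.2 _)).symm⟩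
  · exact ⟨(compl_adj_of_notMem_range hw.1 (by simp +decide [hw.2])).symm,
      (compl_adj_of_notMem_range hw.1 (by simp +decide [hw.2])).symm⟩

theorem adj_of_mem_cycR_of_mem_cycX (hC : IsInducedFiveCycle G v) (h4K1 : _root_.Free G fourK1)
    {r x : V} (hr : r ∈ cycR G v) {i : ZMod 5} (hx : x ∈ cycX G v i) : G.Adj r x :=
  hC.isClique_cycR_union_cycX h4K1 i (.inl hr) (.inr hx) <| by
    rintro rfl
    exact hr.2 i ((hx.2 i).2 (.inl rfl))

theorem not_adj_of_mem_cycR_of_mem_cycY (hC : IsInducedFiveCycle G v)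
    (hclaw : _root_.Free G claw) {r y : V} (hr : r ∈ cycR G v) {i : ZMod 5}
    (hy : y ∈ cycY G v i) : ¬ G.Adj r y := by
  intro hry
  have hcompl : Gᶜ.Adj (v i) (v (i + 2)) := (hC.compl_adj_iff _ _).2 (.inl rfl)
  exact hcompl.2 <| isClique_neighborSet_inter_compl_neighborSet hclaw hry.symm
    ⟨(hy.2 i).2 (by simp), compl_adj_of_notMem_range hr.1 (hr.2 _)⟩
    ⟨(hy.2 (i + 2)).2 (by simp), compl_adj_of_notMem_range hr.1 (hr.2 _)⟩ hcompl.1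

theorem isClique_insert_cycY (hC : IsInducedFiveCycle G v) (hclaw : _root_.Free G claw)
    (i : ZMod 5) : G.IsClique (insert (v (i + 1)) (cycY G v i)) := by
  have hadj : G.Adj (v i) (v (i + 4)) := (hC _ _).2 (by decide +revert)
  refine (isClique_neighborSet_inter_compl_neighborSet hclaw hadj).subset ?_
  rintro w (rfl | hw)
  · exact ⟨(hC _ _).2 (.inl rfl), (hC.compl_adj_iff _ _).2 (by clear hadj; decide +revert)⟩
  · exact ⟨((hw.2 i).2 (.inl rfl)).symm,
      (compl_adj_of_notMem_range hw.1 (by simp +decide [hw.2])).symm⟩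

theorem encard_cycX_le_two (hC : IsInducedFiveCycle G v) (h4K1 : _root_.Free G fourK1)
    (hK5e : _root_.Free G K5e) (hR : (cycR G v).Nonempty) (i : ZMod 5) :
    (cycX G v i).encard ≤ 2 := by
  by_contra! hcard
  obtain ⟨r, hr⟩ := hR
  have hclique := isClique_setOf_subset_neighborSet hK5e
    ((hC.isClique_cycR_union_cycX h4K1 i).subset Set.subset_union_right) hcard
  exact hr.2 i <| hclique (fun x hx => hC.adj_of_mem_cycR_of_mem_cycX h4K1 hr hx)
    (fun x hx => ((hx.2 i).2 (.inl rfl)).symm) fun h => hr.1 ⟨i, h.symm⟩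

theorem encard_cycY_le_one (hC : IsInducedFiveCycle G v) (hclaw : _root_.Free G claw)
    (hK5e : _root_.Free G K5e) (i : ZMod 5) : (cycY G v i).encard ≤ 1 := by
  have hcompl : Gᶜ.Adj (v i) (v (i + 2)) := (hC.compl_adj_iff _ _).2 (.inl rfl)
  by_contra! hcard
  have hcard' : 2 < (insert (v (i + 1)) (cycY G v i)).encard := by
    rw [Set.encard_insert_of_notMem fun h => h.1 ⟨_, rfl⟩, ← one_add_one_eq_two]
    exact ENat.add_lt_add_iff_right (by simp) |>.2 hcard
  have hclique := isClique_setOf_subset_neighborSet hK5e (hC.isClique_insert_cycY hclaw i) hcard'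
  refine hcompl.2 (hclique ?_ ?_ hcompl.1)
  · rintro w (rfl | hw)
    exacts [(hC _ _).2 (.inl rfl), ((hw.2 i).2 (by simp)).symm]
  · rintro w (rfl | hw)
    exacts [(hC _ _).2 (.inr (by ring)), ((hw.2 (i + 2)).2 (by simp)).symm]

theorem card_le_twenty_add_encard_cycR (hC : IsInducedFiveCycle G v) (hclaw : _root_.Free G claw)
    (h4K1 : _root_.Free G fourK1) (hK5e : _root_.Free G K5e) (hW5 : _root_.Free G wheel5)
    (hC5t : _root_.Free G C5twin) (hR : (cycR G v).Nonempty) :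
    ENat.card V ≤ 20 + (cycR G v).encard := by
  have hcover : Set.univ ⊆ Set.range v ∪ (⋃ i, cycX G v i) ∪ (⋃ i, cycY G v i) ∪ cycR G v := by
    intro w _
    by_cases hw : w ∈ Set.range v
    · exact .inl (.inl (.inl hw))
    · rcases hC.mem_cycR_or_mem_cycX_or_mem_cycY hclaw hW5 hC5t hw with h | h | h
      exacts [.inr h, .inl (.inl (.inr (Set.mem_iUnion.2 h))), .inl (.inr (Set.mem_iUnion.2 h))]
  have hrange : (Set.range v).encard ≤ 5 := by
    simpa [ENat.card_eq_coe_fintype_card] using Set.encard_image_le v Set.univ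
  have hX : (⋃ i, cycX G v i).encard ≤ 10 :=
    calc (⋃ i, cycX G v i).encard ≤ ∑ i, (cycX G v i).encard := Set.encard_iUnion_le_of_fintype _
      _ ≤ ∑ _ : ZMod 5, 2 := Finset.sum_le_sum fun i _ => hC.encard_cycX_le_two h4K1 hK5e hR i
      _ = 10 := by simp; norm_num
  have hY : (⋃ i, cycY G v i).encard ≤ 5 :=
    calc (⋃ i, cycY G v i).encard ≤ ∑ i, (cycY G v i).encard := Set.encard_iUnion_le_of_fintype _
      _ ≤ ∑ _ : ZMod 5, 1 := Finset.sum_le_sum fun i _ => hC.encard_cycY_le_one hclaw hK5e i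
      _ = 5 := by simp
  calc ENat.card V = (Set.univ : Set V).encard := (Set.encard_univ V).symm
    _ ≤ (Set.range v).encard + (⋃ i, cycX G v i).encard + (⋃ i, cycY G v i).encard
        + (cycR G v).encard :=
      (Set.encard_le_encard hcover).trans <| (Set.encard_union_le _ _).trans <| by
        gcongr
        exact (Set.encard_union_le _ _).trans (by gcongr; exact Set.encard_union_le _ _)
    _ ≤ 5 + 10 + 5 + (cycR G v).encard := by gcongr
    _ = 20 + (cycR G v).encard := by norm_num

theorem isClique_iUnion_cycX (hC : IsInducedFiveCycle G v) (h4K1 : _root_.Free G fourK1)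
    (hK5e : _root_.Free G K5e) (hR : 2 < (cycR G v).encard) :
    G.IsClique (⋃ i, cycX G v i) := by
  have hclique : G.IsClique (cycR G v) :=
    (hC.isClique_cycR_union_cycX h4K1 0).subset Set.subset_union_left
  refine (isClique_setOf_subset_neighborSet hK5e hclique hR).subset ?_
  exact Set.iUnion_subset fun i x hx r hr => (hC.adj_of_mem_cycR_of_mem_cycX h4K1 hr hx).symm

theorem not_preconnected_induce_compl_iUnion_cycX (hC : IsInducedFiveCycle G v)
    (hclaw : _root_.Free G claw) (hW5 : _root_.Free G wheel5) (hC5t : _root_.Free G C5twin)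
    (hR : (cycR G v).Nonempty) : ¬ (G.induce (⋃ i, cycX G v i)ᶜ).Preconnected := by
  obtain ⟨r, hr⟩ := hR
  have hrX : r ∉ ⋃ i, cycX G v i := fun h => by
    obtain ⟨i, hi⟩ := Set.mem_iUnion.1 h
    exact hr.2 i ((hi.2 i).2 (.inl rfl))
  have hvX : v 0 ∉ ⋃ i, cycX G v i := fun h => by
    obtain ⟨i, hi⟩ := Set.mem_iUnion.1 h
    exact hi.1 ⟨0, rfl⟩
  refine not_preconnected_induce_of_forall_not_adj ⟨r, hrX, hr⟩
    ⟨v 0, hvX, fun h => h.1 ⟨0, rfl⟩⟩ ?_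
  rintro a ⟨-, ha⟩ b ⟨hbX, hbR⟩ hab
  by_cases hb : b ∈ Set.range v
  · obtain ⟨j, rfl⟩ := hb
    exact ha.2 j hab
  · rcases hC.mem_cycR_or_mem_cycX_or_mem_cycY hclaw hW5 hC5t hb with h | h | ⟨i, h⟩
    exacts [hbR h, hbX (Set.mem_iUnion.2 h), hC.not_adj_of_mem_cycR_of_mem_cycY hclaw ha h hab]

end IsInducedFiveCycle

theorem stmt_14_general {V : Type*} (G : SimpleGraph V) (hclaw : _root_.Free G claw)
    (h4K1 : _root_.Free G fourK1) (hK5e : _root_.Free G K5e) (hW5 : _root_.Free G wheel5)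
    (hC5t : _root_.Free G C5twin) (v : ZMod 5 → V) (hC : IsInducedFiveCycle G v)
    (hR : (cycR G v).Nonempty) :
    ENat.card V ≤ 22 ∨ ∃ S : Set V, G.IsClique S ∧ ¬ (G.induce Sᶜ).Preconnected := by
  rcases le_or_gt (cycR G v).encard 2 with hcard | hcard
  · left
    calc ENat.card V ≤ 20 + (cycR G v).encard :=
          hC.card_le_twenty_add_encard_cycR hclaw h4K1 hK5e hW5 hC5t hR
      _ ≤ 20 + 2 := by gcongr
      _ = 22 := by norm_num
  · exact .inr ⟨⋃ i, cycX G v i, hC.isClique_iUnion_cycX h4K1 hK5e hcard,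
      hC.not_preconnected_induce_compl_iUnion_cycX hclaw hW5 hC5t hR⟩

theorem stmt_14     {V : Type*} [Fintype V] (G : SimpleGraph V)
    (hconn : G.Connected)
    (hclaw : _root_.Free G claw) (h4K1 : _root_.Free G fourK1) (hK5e : _root_.Free G K5e)
    (hW5 : _root_.Free G wheel5) (hC5t : _root_.Free G C5twin) (hP5t : _root_.Free G P5twin)
    (v : ZMod 5 → V) (hv : Function.Injective v)
    (hC : ∀ i j : ZMod 5, G.Adj (v i) (v j) ↔ (j = i + 1 ∨ i = j + 1))
    (hR : (cycR G v).Nonempty) :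
    Fintype.card V ≤ 22 ∨
      ∃ S : Set V, G.IsClique S ∧ ¬ (G.induce (Sᶜ : Set V)).Connected := by
  refine (stmt_14_general G hclaw h4K1 hK5e hW5 hC5t v hC hR).imp (fun h => ?_)
    fun ⟨S, hS, hcut⟩ => ⟨S, hS, fun h => hcut h.preconnected⟩
  simpa [ENat.card_eq_coe_fintype_card] using h
end
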